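/- Scaling vector field commutation with a bilinear operator of homogeneous symbol: if Q is a bilinear operator with symbol q(ξ,η) homogeneous of degree c (i.e., q(λξ,λη) = λᶜ q(ξ,η) for λ > 0), and S₀ = x·∇ is the spatial scaling field, then S₀ Q(h₁,h₂) = Q(S₀h₁, h₂) + Q(h₁, S₀h₂) − c·Q(h₁,h₂) for Schwartz functions h₁, h₂. -/

import Mathlib

open MeasureTheory

/-- Fourier transform on ℝ² with the convention `f̂(ξ) = ∫ e^{−i x·ξ} f(x) dx`. -/
noncomputable def ft2 (f : ℝ × ℝ → ℂ) (ξ : ℝ × ℝ) : ℂ :=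
  ∫ x : ℝ × ℝ, Complex.exp (-Complex.I * (x.1 * ξ.1 + x.2 * ξ.2)) * f x

/-- The bilinear operator with symbol `q`, defined by
`F[Q(h₁,h₂)](ξ) = ∫ q(ξ,η) ĥ₁(ξ−η) ĥ₂(η) dη`. -/
noncomputable def Qop (q : ℝ × ℝ → ℝ × ℝ → ℂ) (h₁ h₂ : ℝ × ℝ → ℂ) (x : ℝ × ℝ) : ℂ :=
  (((2 * Real.pi) ^ 2 : ℝ) : ℂ)⁻¹ *
    ∫ ξ : ℝ × ℝ, Complex.exp (Complex.I * (x.1 * ξ.1 + x.2 * ξ.2)) *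
      ∫ η : ℝ × ℝ, q ξ η * ft2 h₁ (ξ - η) * ft2 h₂ η

/-- The spatial scaling vector field `S₀ = x·∇`. -/
noncomputable def S0 (f : ℝ × ℝ → ℂ) (x : ℝ × ℝ) : ℂ :=
  (x.1 : ℂ) * fderiv ℝ f x (1, 0) + (x.2 : ℂ) * fderiv ℝ f x (0, 1)

/-!
The field `x·∇` generates the dilations `f ↦ f (s • ·)`. If `k (s⁻¹ • w) (s • p) = sᶜ k w p`,
the substitution `p ↦ s • p` in `G w = ∫ k w p Ψ p dp` gives
`G (s⁻¹ • w) = s^(n + c) ∫ k w p Ψ (s • p) dp`, where `n` is the dimension of the `p`-space, and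
differentiating at `s = 1` yields
`w·∇G = -((n + c) G + ∫ k w p (p·∇Ψ) dp)`.
For the Fourier kernel `n = 2` and `c = 0`, so `x·∇` becomes `-(ξ·∇ + 2)` on the Fourier side.
For the kernel `e^{i x·ξ} q(ξ, η)` of `Q` against `Ψ(ξ, η) = ĥ₁(ξ - η) ĥ₂(η)` one has `n = 4`.
Since linear changes of variables preserve the Euler field, `(ξ, η)·∇Ψ` obeys the Leibniz rule in
`ĥ₁` and `ĥ₂`, and the two contributions `2` cancel the `4`.
-/

open Module Filter
open scoped SchwartzMap Topology

section Euler

variable {E F : Type*} [NormedAddCommGroup E] [NormedSpace ℝ E]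
  [NormedAddCommGroup F] [NormedSpace ℝ F]

/-- The Euler field `x·∇` of a normed space applied to `f`; it generates the dilations
`f ↦ f (s • ·)`. -/
noncomputable def euler (f : E → F) (x : E) : F := fderiv ℝ f x x

theorem hasDerivAt_comp_smul {f : E → F} {s : ℝ} {x : E} (hs : s ≠ 0)
    (hf : DifferentiableAt ℝ f (s • x)) :
    HasDerivAt (fun t : ℝ ↦ f (t • x)) (s⁻¹ • euler f (s • x)) s := by
  have hsmul : HasDerivAt (fun t : ℝ ↦ t • x) x s := by
    simpa using (hasDerivAt_id s).smul_const x
  refine (hf.hasFDerivAt.comp_hasDerivAt s hsmul).congr_deriv ?_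
  rw [euler, map_smul, inv_smul_smul₀ hs]

theorem hasDerivAt_comp_inv_smul_one {f : E → F} {x : E} (hf : DifferentiableAt ℝ f x) :
    HasDerivAt (fun s : ℝ ↦ f (s⁻¹ • x)) (-euler f x) 1 := by
  have hdil : HasDerivAt (fun t : ℝ ↦ f (t • x)) (euler f x) (1 : ℝ)⁻¹ := by
    simpa using hasDerivAt_comp_smul one_ne_zero (by simpa using hf : DifferentiableAt ℝ f _)
  simpa [Function.comp_def] using HasDerivAt.scomp (1 : ℝ) hdil (hasDerivAt_inv one_ne_zero)

theorem euler_mul {A : Type*} [NormedCommRing A] [NormedAlgebra ℝ A] {f g : E → A} {x : E}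
    (hf : DifferentiableAt ℝ f x) (hg : DifferentiableAt ℝ g x) :
    euler (fun y ↦ f y * g y) x = euler f x * g x + f x * euler g x := by
  simp only [euler, fderiv_fun_mul hf hg, add_apply, smul_apply, smul_eq_mul]
  ring

theorem euler_comp_continuousLinearMap {G : Type*} [NormedAddCommGroup G] [NormedSpace ℝ G]
    {f : F → G} (L : E →L[ℝ] F) {x : E} (hf : DifferentiableAt ℝ f (L x)) :
    euler (fun y ↦ f (L y)) x = euler f (L x) := by
  simp [euler, fderiv_fun_comp x hf L.differentiableAt]

theorem euler_const_mul {𝕜 : Type*} [NormedField 𝕜] [NormedAlgebra ℝ 𝕜] (a : 𝕜) (f : E → 𝕜)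
    (x : E) : euler (fun y ↦ a * f y) x = a * euler f x := by
  have hfderiv : fderiv ℝ (fun y ↦ a * f y) = a • fderiv ℝ f := fderiv_const_smul_field a
  rw [euler, hfderiv]
  rfl

/-- The Euler field as an operator on Schwartz functions. -/
noncomputable def eulerSchwartz (f : 𝓢(E, F)) : 𝓢(E, F) :=
  SchwartzMap.bilinLeftCLM (ContinuousLinearMap.id ℝ (E →L[ℝ] F)) Function.HasTemperateGrowth.id
    (SchwartzMap.fderivCLM ℝ E F f)

@[simp]
theorem coe_eulerSchwartz (f : 𝓢(E, F)) : ⇑(eulerSchwartz f) = euler f := rfl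

end Euler

section TensorProduct

theorem one_add_norm_prod_le {E F : Type*} [SeminormedAddCommGroup E] [SeminormedAddCommGroup F]
    (p : E × F) : 1 + ‖p‖ ≤ (1 + ‖p.1‖) * (1 + ‖p.2‖) := by
  have hp : ‖p‖ ≤ ‖p.1‖ + ‖p.2‖ :=
    max_le_add_of_nonneg (norm_nonneg _) (norm_nonneg _)
  nlinarith [norm_nonneg p.1, norm_nonneg p.2]

variable {E F : Type*} [NormedAddCommGroup E] [NormedSpace ℝ E]
  [NormedAddCommGroup F] [NormedSpace ℝ F]

theorem norm_iteratedFDeriv_comp_continuousLinearMap_le {G : Type*} [NormedAddCommGroup G]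
    [NormedSpace ℝ G] {f : F → G} {n : ℕ} (hf : ContDiff ℝ n f) (L : E →L[ℝ] F) (hL : ‖L‖ ≤ 1)
    (x : E) :
    ‖iteratedFDeriv ℝ n (fun y ↦ f (L y)) x‖ ≤ ‖iteratedFDeriv ℝ n f (L x)‖ := by
  have hcomp := L.iteratedFDeriv_comp_right hf x le_rfl
  rw [Function.comp_def] at hcomp
  rw [hcomp]
  refine (ContinuousMultilinearMap.norm_compContinuousLinearMap_le _ _).trans ?_
  simp only [Finset.prod_const, Finset.card_univ, Fintype.card_fin]
  exact mul_le_of_le_one_right (norm_nonneg _) (pow_le_one₀ (norm_nonneg _) hL)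

theorem exists_one_add_norm_pow_mul_iteratedFDeriv_le (f : 𝓢(E, F)) (k n : ℕ) :
    ∃ K : ℝ, ∀ i ≤ n, ∀ x, (1 + ‖x‖) ^ k * ‖iteratedFDeriv ℝ i f x‖ ≤ K :=
  ⟨_, fun _ hi x ↦ SchwartzMap.one_add_le_sup_seminorm_apply (𝕜 := ℝ) (m := (k, n)) le_rfl hi f x⟩

/-- The tensor product `(x, y) ↦ f x * g y` of two Schwartz functions. -/
noncomputable def schwartzTensor (f : 𝓢(E, ℂ)) (g : 𝓢(F, ℂ)) : 𝓢(E × F, ℂ) where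
  toFun p := f p.1 * g p.2
  smooth' := ((f.smooth ⊤).comp contDiff_fst).mul ((g.smooth ⊤).comp contDiff_snd)
  decay' k n := by
    obtain ⟨A, hA⟩ := exists_one_add_norm_pow_mul_iteratedFDeriv_le f k n
    obtain ⟨B, hB⟩ := exists_one_add_norm_pow_mul_iteratedFDeriv_le g k n
    have hA0 : 0 ≤ A := le_trans (by positivity) (hA 0 n.zero_le 0)
    refine ⟨∑ i ∈ Finset.range (n + 1), n.choose i * (A * B), fun p ↦ ?_⟩
    have hleibniz := norm_iteratedFDeriv_mul_le (𝕜 := ℝ) ((f.smooth ⊤).comp contDiff_fst)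
      ((g.smooth ⊤).comp contDiff_snd) p (n := n) (mod_cast le_top)
    have hweight : ‖p‖ ^ k ≤ (1 + ‖p.1‖) ^ k * (1 + ‖p.2‖) ^ k := by
      rw [← mul_pow]
      gcongr
      linarith [one_add_norm_prod_le p]
    refine (mul_le_mul_of_nonneg_left hleibniz (by positivity)).trans ?_
    rw [Finset.mul_sum]
    refine Finset.sum_le_sum fun i hi ↦ ?_
    have hf := norm_iteratedFDeriv_comp_continuousLinearMap_le (f.smooth i)
      (ContinuousLinearMap.fst ℝ E F) (ContinuousLinearMap.norm_fst_le ..) p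
    have hg := norm_iteratedFDeriv_comp_continuousLinearMap_le (g.smooth (n - i : ℕ))
      (ContinuousLinearMap.snd ℝ E F) (ContinuousLinearMap.norm_snd_le ..) p
    calc ‖p‖ ^ k * (n.choose i * ‖iteratedFDeriv ℝ i (f ∘ Prod.fst) p‖ *
          ‖iteratedFDeriv ℝ (n - i) (g ∘ Prod.snd) p‖)
        ≤ (1 + ‖p.1‖) ^ k * (1 + ‖p.2‖) ^ k * (n.choose i * ‖iteratedFDeriv ℝ i f p.1‖ *
          ‖iteratedFDeriv ℝ (n - i) g p.2‖) := by gcongr <;> assumption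
      _ = n.choose i * (((1 + ‖p.1‖) ^ k * ‖iteratedFDeriv ℝ i f p.1‖) *
          ((1 + ‖p.2‖) ^ k * ‖iteratedFDeriv ℝ (n - i) g p.2‖)) := by ring
      _ ≤ n.choose i * (A * B) := by
        gcongr
        · exact hA i (Nat.lt_succ_iff.mp (Finset.mem_range.mp hi)) p.1
        · exact hB (n - i) (n.sub_le i) p.2

end TensorProduct

theorem exists_norm_comp_smul_le {E F : Type*} [NormedAddCommGroup E] [NormedSpace ℝ E]
    [NormedAddCommGroup F] [NormedSpace ℝ F] (Ψ : 𝓢(E, F)) (N : ℕ) :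
    ∃ K : ℝ, ∀ s : ℝ, 1 / 2 < s → ∀ p, ‖Ψ (s • p)‖ ≤ K * ((1 + ‖p‖) ^ N)⁻¹ := by
  obtain ⟨K, hK⟩ := exists_one_add_norm_pow_mul_iteratedFDeriv_le Ψ N 0
  refine ⟨2 ^ N * K, fun s hs p ↦ ?_⟩
  have hdil : 1 + ‖p‖ ≤ 2 * (1 + ‖s • p‖) := by
    rw [norm_smul, Real.norm_of_nonneg (by linarith)]
    nlinarith [norm_nonneg p]
  have hΨ : (1 + ‖s • p‖) ^ N * ‖Ψ (s • p)‖ ≤ K := by simpa using hK 0 le_rfl (s • p)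
  rw [← div_eq_mul_inv, le_div_iff₀' (by positivity)]
  calc (1 + ‖p‖) ^ N * ‖Ψ (s • p)‖ ≤ (2 * (1 + ‖s • p‖)) ^ N * ‖Ψ (s • p)‖ := by gcongr
    _ = 2 ^ N * ((1 + ‖s • p‖) ^ N * ‖Ψ (s • p)‖) := by rw [mul_pow, mul_assoc]
    _ ≤ 2 ^ N * K := by gcongr

section Tempered

variable {E : Type*} [NormedAddCommGroup E] [MeasurableSpace E]

/-- `m` is `μ`-integrable against some weight `(1 + ‖p‖)⁻ᴺ`, so that it defines a tempered
distribution by integration. -/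
def IsTempered (m : E → ℂ) (μ : Measure E) : Prop :=
  ∃ N : ℕ, Integrable (fun p ↦ ((1 + ‖p‖) ^ N)⁻¹ • m p) μ

namespace IsTempered

variable {m : E → ℂ} {μ : Measure E}

theorem bdd_mul (hm : IsTempered m μ) {u : E → ℂ} (hu : AEStronglyMeasurable u μ) {M : ℝ}
    (hM : ∀ p, ‖u p‖ ≤ M) : IsTempered (fun p ↦ u p * m p) μ := by
  obtain ⟨N, hN⟩ := hm
  refine ⟨N, (hN.bdd_mul hu (.of_forall hM)).congr (.of_forall fun p ↦ ?_)⟩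
  exact mul_smul_comm ..

variable [BorelSpace E]

protected theorem aestronglyMeasurable (hm : IsTempered m μ) : AEStronglyMeasurable m μ := by
  obtain ⟨N, hN⟩ := hm
  have hw : Measurable fun p : E ↦ (1 + ‖p‖) ^ N := by fun_prop
  refine (hw.aestronglyMeasurable.smul hN.1).congr (.of_forall fun p ↦ ?_)
  exact smul_inv_smul₀ (by positivity : (1 + ‖p‖) ^ N ≠ 0) (m p)

theorem norm_id_mul (hm : IsTempered m μ) : IsTempered (fun p ↦ ‖p‖ * m p) μ := by
  have hmeas := hm.aestronglyMeasurable
  obtain ⟨N, hN⟩ := hm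
  have hw : Measurable fun p : E ↦ ((1 + ‖p‖) ^ (N + 1))⁻¹ := by fun_prop
  have hnorm : Measurable fun p : E ↦ (‖p‖ : ℂ) := by fun_prop
  refine ⟨N + 1, hN.mono (hw.aestronglyMeasurable.smul (hnorm.aestronglyMeasurable.mul hmeas))
    (.of_forall fun p ↦ ?_)⟩
  simp only [norm_smul, norm_mul, norm_inv, norm_pow, Complex.norm_real, norm_norm,
    Real.norm_of_nonneg (by positivity : 0 ≤ 1 + ‖p‖), ← mul_assoc]
  gcongr
  rw [pow_succ, mul_inv, mul_assoc]
  have hp : (1 + ‖p‖)⁻¹ * ‖p‖ ≤ 1 := by rw [inv_mul_le_one₀] <;> linarith [norm_nonneg p]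
  exact mul_le_of_le_one_right (by positivity) hp

theorem of_norm_le [μ.HasTemperateGrowth] (hm : AEStronglyMeasurable m μ) {M : ℝ}
    {c : ℕ} (hM : ∀ p, ‖m p‖ ≤ M * (1 + ‖p‖) ^ c) : IsTempered m μ := by
  have hw : Measurable fun p : E ↦ ((1 + ‖p‖) ^ (c + μ.integrablePower))⁻¹ := by fun_prop
  refine ⟨c + μ.integrablePower, ((Measure.integrable_pow_neg_integrablePower μ).const_mul M).mono'
    (hw.aestronglyMeasurable.smul hm) (.of_forall fun p ↦ ?_)⟩
  have hp : 0 < 1 + ‖p‖ := by positivity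
  rw [norm_smul, norm_inv, norm_pow, Real.norm_of_nonneg hp.le, Real.rpow_neg hp.le,
    Real.rpow_natCast, inv_mul_le_iff₀ (by positivity), pow_add]
  refine (hM p).trans_eq ?_
  field_simp

end IsTempered

variable [NormedSpace ℝ E] {m : E → ℂ} {μ : Measure E}

theorem IsTempered.exists_integrable_bound (hm : IsTempered m μ) (Ψ : 𝓢(E, ℂ)) :
    ∃ bound : E → ℝ, Integrable bound μ ∧
      ∀ s : ℝ, 1 / 2 < s → ∀ p, ‖m p * Ψ (s • p)‖ ≤ bound p := by
  obtain ⟨N, hN⟩ := hm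
  obtain ⟨K, hK⟩ := exists_norm_comp_smul_le Ψ N
  refine ⟨fun p ↦ K * ‖((1 + ‖p‖) ^ N)⁻¹ • m p‖, hN.norm.const_mul K, fun s hs p ↦ ?_⟩
  calc ‖m p * Ψ (s • p)‖ = ‖m p‖ * ‖Ψ (s • p)‖ := norm_mul ..
    _ ≤ ‖m p‖ * (K * ((1 + ‖p‖) ^ N)⁻¹) := by gcongr; exact hK s hs p
    _ = K * ‖((1 + ‖p‖) ^ N)⁻¹ • m p‖ := by
      rw [norm_smul, Real.norm_of_nonneg (by positivity)]
      ring

variable [BorelSpace E]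

theorem IsTempered.integrable_mul (hm : IsTempered m μ) (Ψ : 𝓢(E, ℂ)) :
    Integrable (fun p ↦ m p * Ψ p) μ := by
  obtain ⟨bound, hint, hbound⟩ := hm.exists_integrable_bound Ψ
  refine hint.mono' (hm.aestronglyMeasurable.mul Ψ.continuous.aestronglyMeasurable)
    (.of_forall fun p ↦ ?_)
  simpa using hbound 1 (by norm_num) p

theorem IsTempered.hasDerivAt_integral_mul_comp_smul (hm : IsTempered m μ) (Ψ : 𝓢(E, ℂ)) :
    HasDerivAt (fun s : ℝ ↦ ∫ p, m p * Ψ (s • p) ∂μ) (∫ p, m p * euler Ψ p ∂μ) 1 := by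
  have hmeas := hm.aestronglyMeasurable
  obtain ⟨bound, hint, hbound⟩ := hm.exists_integrable_bound (eulerSchwartz Ψ)
  have hderiv : ∀ s : ℝ, 1 / 2 < s → ∀ p, HasDerivAt (fun t : ℝ ↦ m p * Ψ (t • p))
      (m p * (s⁻¹ • euler Ψ (s • p))) s := fun s hs p ↦
    (hasDerivAt_comp_smul (by linarith) Ψ.differentiableAt).const_mul (m p)
  have hle : ∀ s : ℝ, 1 / 2 < s → ∀ p, ‖m p * (s⁻¹ • euler Ψ (s • p))‖ ≤ 2 * bound p := by
    intro s hs p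
    have hs2 : s⁻¹ ≤ 2 := by rw [inv_le_comm₀] <;> linarith
    rw [mul_smul_comm, norm_smul, Real.norm_of_nonneg (by positivity)]
    gcongr
    exact hbound s hs p
  have hmeasΨ : ∀ s : ℝ, AEStronglyMeasurable (fun p ↦ m p * Ψ (s • p)) μ := fun s ↦
    hmeas.mul (Ψ.continuous.comp (continuous_const_smul s)).aestronglyMeasurable
  have hmeasEuler : AEStronglyMeasurable (fun p ↦ m p * euler Ψ p) μ :=
    hmeas.mul (eulerSchwartz Ψ).continuous.aestronglyMeasurable
  simpa using (hasDerivAt_integral_of_dominated_loc_of_deriv_le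
    (Ioi_mem_nhds (by norm_num : (1 / 2 : ℝ) < 1))
    (.of_forall hmeasΨ) (by simpa using hm.integrable_mul Ψ) (by simpa using hmeasEuler)
    (.of_forall fun p s hs ↦ hle s hs p) (hint.const_mul 2)
    (.of_forall fun p s hs ↦ hderiv s hs p)).2

end Tempered

theorem IsTempered.of_homogeneous {E : Type*} [NormedAddCommGroup E] [NormedSpace ℝ E]
    [FiniteDimensional ℝ E] [MeasurableSpace E] [BorelSpace E] {μ : Measure E}
    [μ.HasTemperateGrowth] {m : E → ℂ} (hm : Continuous m) {c : ℕ}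
    (hom : ∀ t : ℝ, 0 < t → ∀ p, m (t • p) = (t : ℂ) ^ c * m p) : IsTempered m μ := by
  obtain ⟨M, hM⟩ := (isCompact_closedBall (0 : E) 1).exists_bound_of_continuousOn hm.continuousOn
  refine .of_norm_le hm.aestronglyMeasurable (M := M) (c := c) fun p ↦ ?_
  have ht : 0 < 1 + ‖p‖ := by positivity
  have hball : (1 + ‖p‖)⁻¹ • p ∈ Metric.closedBall (0 : E) 1 := by
    rw [mem_closedBall_zero_iff, norm_smul, norm_inv, Real.norm_of_nonneg ht.le,
      inv_mul_le_one₀ ht]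
    linarith
  calc ‖m p‖ = (1 + ‖p‖) ^ c * ‖m ((1 + ‖p‖)⁻¹ • p)‖ := by
        conv_lhs => rw [← smul_inv_smul₀ ht.ne' p, hom _ ht, norm_mul, norm_pow,
          Complex.norm_real, Real.norm_of_nonneg ht.le]
    _ ≤ M * (1 + ‖p‖) ^ c := by
        rw [mul_comm]
        gcongr
        exact hM _ hball

section HomogeneousKernel

variable {E W : Type*} [NormedAddCommGroup E] [NormedSpace ℝ E] [FiniteDimensional ℝ E]
  [MeasurableSpace E] [BorelSpace E] [NormedAddCommGroup W] [NormedSpace ℝ W]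

theorem integral_kernel_inv_smul {μ : Measure E} [μ.IsAddHaarMeasure] {k : W → E → ℂ} {c : ℂ}
    (hk : ∀ s : ℝ, 0 < s → ∀ w p, k (s⁻¹ • w) (s • p) = (s : ℂ) ^ c * k w p) (Ψ : E → ℂ)
    {s : ℝ} (hs : 0 < s) (w : W) :
    ∫ p, k (s⁻¹ • w) p * Ψ p ∂μ =
      (s : ℂ) ^ (finrank ℝ E + c) * ∫ p, k w p * Ψ (s • p) ∂μ := by
  have hs0 : (s : ℂ) ≠ 0 := mod_cast hs.ne'
  have hdil := Measure.integral_comp_smul_of_nonneg μ (fun p ↦ k (s⁻¹ • w) p * Ψ p) s (hR := hs.le)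
  simp only [hk s hs, mul_assoc, integral_const_mul, Complex.real_smul] at hdil
  rw [Complex.cpow_add _ _ hs0, Complex.cpow_natCast, mul_assoc, hdil]
  push_cast
  rw [mul_inv_cancel_left₀ (pow_ne_zero _ hs0)]

theorem euler_integral_kernel {μ : Measure E} [μ.IsAddHaarMeasure] {k : W → E → ℂ} {c : ℂ}
    (hk : ∀ s : ℝ, 0 < s → ∀ w p, k (s⁻¹ • w) (s • p) = (s : ℂ) ^ c * k w p) {w : W}
    (hkw : IsTempered (k w) μ) (Ψ : 𝓢(E, ℂ))
    (hd : DifferentiableAt ℝ (fun w' ↦ ∫ p, k w' p * Ψ p ∂μ) w) :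
    euler (fun w' ↦ ∫ p, k w' p * Ψ p ∂μ) w =
      -((finrank ℝ E + c) * ∫ p, k w p * Ψ p ∂μ + ∫ p, k w p * euler Ψ p ∂μ) := by
  have hpow : HasDerivAt (fun s : ℝ ↦ (s : ℂ) ^ (finrank ℝ E + c)) (finrank ℝ E + c) 1 := by
    simpa using ((hasDerivAt_id _).cpow_const (c := finrank ℝ E + c) (by simp)).comp_ofReal (z := 1)
  have hright := hpow.mul (hkw.hasDerivAt_integral_mul_comp_smul Ψ)
  have hleft := hasDerivAt_comp_inv_smul_one hd
  have heq : (fun s : ℝ ↦ ∫ p, k (s⁻¹ • w) p * Ψ p ∂μ) =ᶠ[𝓝 1]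
      fun s : ℝ ↦ (s : ℂ) ^ (finrank ℝ E + c) * ∫ p, k w p * Ψ (s • p) ∂μ :=
    eventually_of_mem (Ioi_mem_nhds one_pos) fun s hs ↦ integral_kernel_inv_smul hk Ψ hs w
  rw [← neg_eq_iff_eq_neg, hleft.unique (hright.congr_of_eventuallyEq heq)]
  simp

end HomogeneousKernel

theorem differentiable_integral_exp_mul {V W : Type*} [NormedAddCommGroup V] [NormedSpace ℝ V]
    [MeasurableSpace V] [BorelSpace V] [SecondCountableTopology V] [NormedAddCommGroup W]
    [NormedSpace ℝ W] {μ : Measure V} (L : V →L[ℝ] W →L[ℝ] ℝ) {k : V → ℂ} (hk : Integrable k μ)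
    (hk' : Integrable (fun v ↦ ‖v‖ * ‖k v‖) μ) :
    Differentiable ℝ fun w ↦ ∫ v, Complex.exp (Complex.I * L v w) * k v ∂μ := by
  have hF := fun w ↦ (VectorFourier.hasFDerivAt_fourierIntegral (-(2 * Real.pi)⁻¹ • L)
    hk hk' w).differentiableAt
  have hchar (v : V) (w : W) : Complex.exp (Complex.I * L v w) =
      Real.fourierChar (-((-(2 * Real.pi)⁻¹ • L) v w)) := by
    rw [Real.fourierChar_apply]
    congr 1
    simp only [mul_inv_rev, smul_apply, smul_eq_mul, neg_mul, neg_neg, Complex.ofReal_mul,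
      Complex.ofReal_ofNat, Complex.ofReal_inv]
    field_simp
  refine fun w ↦ (hF w).congr_of_eventuallyEq (.of_forall fun w' ↦ ?_)
  simp only [hchar]
  rfl

instance {E F : Type*} [NormedAddCommGroup E] [NormedSpace ℝ E] [FiniteDimensional ℝ E]
    [MeasureSpace E] [BorelSpace E] [(volume : Measure E).IsAddHaarMeasure]
    [NormedAddCommGroup F] [NormedSpace ℝ F] [FiniteDimensional ℝ F]
    [MeasureSpace F] [BorelSpace F] [(volume : Measure F).IsAddHaarMeasure] :
    (volume : Measure (E × F)).IsAddHaarMeasure :=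
  inferInstanceAs ((volume : Measure E).prod (volume : Measure F)).IsAddHaarMeasure

section Plane

theorem S0_eq_euler : S0 = euler := by
  ext f x
  have hx : x = x.1 • ((1 : ℝ), (0 : ℝ)) + x.2 • ((0 : ℝ), (1 : ℝ)) := by ext <;> simp
  calc S0 f x = fderiv ℝ f x (x.1 • (1, 0) + x.2 • (0, 1)) := by
        simp only [S0, map_add, map_smul, Complex.real_smul]
    _ = euler f x := by rw [← hx, euler]

/-- The Fourier transform `ft2` as a map of Schwartz functions: Mathlib's transform on the
Euclidean plane with the frequency rescaled by `(2π)⁻¹`. -/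
noncomputable def ft2Schwartz (h : 𝓢(ℝ × ℝ, ℂ)) : 𝓢(ℝ × ℝ, ℂ) :=
  let e := WithLp.prodContinuousLinearEquiv 2 ℝ ℝ ℝ
  let rescale : (ℝ × ℝ) ≃L[ℝ] (ℝ × ℝ) :=
    ContinuousLinearEquiv.smulLeft (Units.mk0 (2 * Real.pi)⁻¹ (by positivity))
  SchwartzMap.compCLMOfContinuousLinearEquiv ℂ (rescale.trans e.symm)
    (FourierTransform.fourier (SchwartzMap.compCLMOfContinuousLinearEquiv ℂ e h))

theorem coe_ft2Schwartz (h : 𝓢(ℝ × ℝ, ℂ)) : ⇑(ft2Schwartz h) = ft2 h := by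
  ext ξ
  have hfourier : ft2Schwartz h ξ = FourierTransform.fourier
      (fun v : WithLp 2 (ℝ × ℝ) ↦ h v.ofLp) (WithLp.toLp 2 ((2 * Real.pi)⁻¹ • ξ)) := by
    rw [ft2Schwartz, SchwartzMap.compCLMOfContinuousLinearEquiv_apply, Function.comp_apply,
      SchwartzMap.fourier_coe]
    rfl
  rw [hfourier, Real.fourier_eq', ft2, ← (WithLp.volume_preserving_ofLp ℝ ℝ).integral_comp
    (MeasurableEquiv.toLp 2 (ℝ × ℝ)).symm.measurableEmbedding]
  refine integral_congr_ae (.of_forall fun v ↦ ?_)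
  simp only [smul_eq_mul]
  congr 2
  simp only [neg_mul, mul_inv_rev, WithLp.toLp_smul, WithLp.prod_inner_apply, WithLp.ofLp_fst,
    WithLp.ofLp_smul, Prod.smul_fst, smul_eq_mul, RCLike.inner_apply, Real.ringHom_apply,
    WithLp.ofLp_snd, Prod.smul_snd, Complex.ofReal_neg, Complex.ofReal_mul, Complex.ofReal_ofNat,
    Complex.ofReal_add, Complex.ofReal_inv, neg_inj]
  field_simp

theorem ft2_S0 (h : 𝓢(ℝ × ℝ, ℂ)) (ξ : ℝ × ℝ) :
    ft2 (S0 h) ξ = -(euler (ft2 h) ξ + 2 * ft2 h ξ) := by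
  let k : ℝ × ℝ → ℝ × ℝ → ℂ := fun ξ x ↦ Complex.exp (-Complex.I * (x.1 * ξ.1 + x.2 * ξ.2))
  have hk (s : ℝ) (hs : 0 < s) (ξ x : ℝ × ℝ) : k (s⁻¹ • ξ) (s • x) = (s : ℂ) ^ (0 : ℂ) * k ξ x := by
    have hs0 : (s : ℂ) ≠ 0 := mod_cast hs.ne'
    simp only [k, Prod.smul_fst, Prod.smul_snd, smul_eq_mul, Complex.cpow_zero, one_mul]
    push_cast
    field_simp
  have hkξ : IsTempered (k ξ) volume := by
    refine .of_norm_le (M := 1) (c := 0) (by fun_prop) fun x ↦ ?_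
    simp [k, Complex.norm_exp]
  have hft (ξ : ℝ × ℝ) : ft2 h ξ = ∫ x, k ξ x * h x := rfl
  have hd : DifferentiableAt ℝ (ft2 h) ξ := by
    rw [← coe_ft2Schwartz]
    exact (ft2Schwartz h).differentiableAt
  have hS0 : ft2 (S0 h) ξ = ∫ x, k ξ x * euler h x := by rw [S0_eq_euler, ft2]
  have heuler := euler_integral_kernel hk hkξ h hd
  simp only [← hft, ← hS0] at heuler
  have hfin : finrank ℝ (ℝ × ℝ) = 2 := by simp
  rw [hfin] at heuler
  push_cast at heuler
  linear_combination heuler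

end Plane

section FrequencyProduct

variable {E : Type*} [NormedAddCommGroup E] [NormedSpace ℝ E]

/-- The product `(ξ, η) ↦ f (ξ - η) * g η` on which a bilinear symbol acts. -/
noncomputable def freqProduct (f g : 𝓢(E, ℂ)) : 𝓢(E × E, ℂ) :=
  SchwartzMap.compCLMOfContinuousLinearEquiv ℝ
    (ContinuousLinearEquiv.equivOfInverse
      ((ContinuousLinearMap.fst ℝ E E - ContinuousLinearMap.snd ℝ E E).prod
        (ContinuousLinearMap.snd ℝ E E))
      ((ContinuousLinearMap.fst ℝ E E + ContinuousLinearMap.snd ℝ E E).prod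
        (ContinuousLinearMap.snd ℝ E E))
      (fun p ↦ by simp) (fun p ↦ by simp))
    (schwartzTensor f g)

@[simp]
theorem freqProduct_apply (f g : 𝓢(E, ℂ)) (p : E × E) :
    freqProduct f g p = f (p.1 - p.2) * g p.2 := rfl

theorem euler_freqProduct (f g : 𝓢(E, ℂ)) :
    euler (freqProduct f g) =
      freqProduct (eulerSchwartz f) g + freqProduct f (eulerSchwartz g) := by
  ext p
  have hf := f.differentiable
  have hg := g.differentiable
  have hfst : euler (fun p : E × E ↦ f (p.1 - p.2)) p = euler f (p.1 - p.2) :=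
    euler_comp_continuousLinearMap (ContinuousLinearMap.fst ℝ E E - ContinuousLinearMap.snd ℝ E E)
      hf.differentiableAt
  have hsnd : euler (fun p : E × E ↦ g p.2) p = euler g p.2 :=
    euler_comp_continuousLinearMap (ContinuousLinearMap.snd ℝ E E) hg.differentiableAt
  have hmul := euler_mul (x := p) (f := fun p : E × E ↦ f (p.1 - p.2)) (g := fun p ↦ g p.2)
    (by fun_prop) (by fun_prop)
  rwa [hfst, hsnd] at hmul

end FrequencyProduct

section BilinearSymbol

variable {q : ℝ × ℝ → ℝ × ℝ → ℂ}

/-- The kernel `e^{i x·ξ} q(ξ, η)`, `p = (ξ, η)`, against which `Qop q h₁ h₂ x` integrates the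
product `ĥ₁(ξ - η) ĥ₂(η)`. -/
noncomputable def symbolKernel (q : ℝ × ℝ → ℝ × ℝ → ℂ) (x : ℝ × ℝ)
    (p : (ℝ × ℝ) × (ℝ × ℝ)) : ℂ :=
  Complex.exp (Complex.I * (x.1 * p.1.1 + x.2 * p.1.2)) * q p.1 p.2

theorem symbolKernel_inv_smul_smul {c : ℂ}
    (hom : ∀ t : ℝ, 0 < t → ∀ ξ η : ℝ × ℝ, q (t • ξ) (t • η) = (t : ℂ) ^ c * q ξ η)
    (s : ℝ) (hs : 0 < s) (x : ℝ × ℝ) (p : (ℝ × ℝ) × (ℝ × ℝ)) :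
    symbolKernel q (s⁻¹ • x) (s • p) = (s : ℂ) ^ c * symbolKernel q x p := by
  have hs0 : (s : ℂ) ≠ 0 := mod_cast hs.ne'
  simp only [symbolKernel, Prod.smul_fst, Prod.smul_snd, hom s hs, smul_eq_mul]
  rw [mul_left_comm]
  push_cast
  congr 4
  field_simp

theorem isTempered_symbolKernel
    (hq : IsTempered (fun p : (ℝ × ℝ) × (ℝ × ℝ) ↦ q p.1 p.2) volume) (x : ℝ × ℝ) :
    IsTempered (symbolKernel q x) volume :=
  hq.bdd_mul (M := 1) (by fun_prop) fun p ↦ by simp [Complex.norm_exp]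

theorem differentiable_integral_symbolKernel_mul
    (hq : IsTempered (fun p : (ℝ × ℝ) × (ℝ × ℝ) ↦ q p.1 p.2) volume)
    (Ψ : 𝓢((ℝ × ℝ) × (ℝ × ℝ), ℂ)) :
    Differentiable ℝ fun x ↦ ∫ p, symbolKernel q x p * Ψ p := by
  let fstCoord : (ℝ × ℝ) × (ℝ × ℝ) →L[ℝ] ℝ × ℝ := .fst ℝ _ _
  let phase : (ℝ × ℝ) × (ℝ × ℝ) →L[ℝ] ℝ × ℝ →L[ℝ] ℝ :=
    (ContinuousLinearMap.mul ℝ ℝ).bilinearComp (.comp (.fst ℝ ℝ ℝ) fstCoord) (.fst ℝ ℝ ℝ) +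
      (ContinuousLinearMap.mul ℝ ℝ).bilinearComp (.comp (.snd ℝ ℝ ℝ) fstCoord) (.snd ℝ ℝ ℝ)
  have hphase (p : (ℝ × ℝ) × (ℝ × ℝ)) (x : ℝ × ℝ) :
      (phase p x : ℂ) = x.1 * p.1.1 + x.2 * p.1.2 := by
    simp [phase, fstCoord, mul_comm]
  have hweight : Integrable fun p : (ℝ × ℝ) × (ℝ × ℝ) ↦ ‖p‖ * ‖q p.1 p.2 * Ψ p‖ := by
    simpa [mul_assoc] using (hq.norm_id_mul.integrable_mul Ψ).norm
  have hdiff := differentiable_integral_exp_mul phase (hq.integrable_mul Ψ) hweight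
  simpa only [hphase, symbolKernel, mul_assoc] using hdiff

theorem Qop_eq_integral_symbolKernel
    (hq : IsTempered (fun p : (ℝ × ℝ) × (ℝ × ℝ) ↦ q p.1 p.2) volume) (h₁ h₂ : 𝓢(ℝ × ℝ, ℂ))
    (x : ℝ × ℝ) :
    Qop q h₁ h₂ x = (((2 * Real.pi) ^ 2 : ℝ) : ℂ)⁻¹ *
      ∫ p, symbolKernel q x p * freqProduct (ft2Schwartz h₁) (ft2Schwartz h₂) p := by
  have hint := (isTempered_symbolKernel hq x).integrable_mul
    (freqProduct (ft2Schwartz h₁) (ft2Schwartz h₂))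
  rw [Qop, Measure.volume_eq_prod (ℝ × ℝ) (ℝ × ℝ), integral_prod _ hint]
  simp only [← integral_const_mul, symbolKernel, freqProduct_apply, coe_ft2Schwartz, mul_assoc]

theorem freqProduct_ft2Schwartz_eulerSchwartz_add (h₁ h₂ : 𝓢(ℝ × ℝ, ℂ)) (p : (ℝ × ℝ) × (ℝ × ℝ)) :
    freqProduct (ft2Schwartz (eulerSchwartz h₁)) (ft2Schwartz h₂) p +
        freqProduct (ft2Schwartz h₁) (ft2Schwartz (eulerSchwartz h₂)) p =
      -(euler (freqProduct (ft2Schwartz h₁) (ft2Schwartz h₂)) p +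
        4 * freqProduct (ft2Schwartz h₁) (ft2Schwartz h₂) p) := by
  simp only [euler_freqProduct, Pi.add_apply, freqProduct_apply, coe_eulerSchwartz,
    coe_ft2Schwartz, ← S0_eq_euler, ft2_S0]
  simp only [S0_eq_euler]
  ring

theorem Qop_S0_add_Qop_S0 (hq : IsTempered (fun p : (ℝ × ℝ) × (ℝ × ℝ) ↦ q p.1 p.2) volume)
    (h₁ h₂ : 𝓢(ℝ × ℝ, ℂ)) (x : ℝ × ℝ) :
    Qop q (S0 h₁) h₂ x + Qop q h₁ (S0 h₂) x =
      -((((2 * Real.pi) ^ 2 : ℝ) : ℂ)⁻¹ * (∫ p, symbolKernel q x p *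
        euler (freqProduct (ft2Schwartz h₁) (ft2Schwartz h₂)) p) + 4 * Qop q h₁ h₂ x) := by
  have hint := (isTempered_symbolKernel hq x).integrable_mul
  have hintE : Integrable fun p ↦ symbolKernel q x p *
      euler (freqProduct (ft2Schwartz h₁) (ft2Schwartz h₂)) p := hint (eulerSchwartz _)
  rw [S0_eq_euler, ← coe_eulerSchwartz, ← coe_eulerSchwartz]
  simp only [Qop_eq_integral_symbolKernel hq]
  rw [← mul_add, ← integral_add (hint _) (hint _)]
  simp only [← mul_add, freqProduct_ft2Schwartz_eulerSchwartz_add]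
  simp only [mul_neg, integral_neg, mul_add, mul_left_comm _ (4 : ℂ)]
  rw [integral_add hintE ((hint _).const_mul 4), integral_const_mul]
  ring

end BilinearSymbol

theorem stmt5_general (c : ℂ) (q : ℝ × ℝ → ℝ × ℝ → ℂ)
    (hq : IsTempered (fun p : (ℝ × ℝ) × (ℝ × ℝ) ↦ q p.1 p.2) volume)
    (hom : ∀ t : ℝ, 0 < t → ∀ ξ η : ℝ × ℝ, q (t • ξ) (t • η) = (t : ℂ) ^ c * q ξ η)
    (h₁ h₂ : 𝓢(ℝ × ℝ, ℂ)) (x : ℝ × ℝ) :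
    S0 (Qop q h₁ h₂) x =
      Qop q (S0 h₁) h₂ x + Qop q h₁ (S0 h₂) x - c * Qop q h₁ h₂ x := by
  set Ψ := freqProduct (ft2Schwartz h₁) (ft2Schwartz h₂)
  have hQ : Qop q h₁ h₂ = fun x ↦
      (((2 * Real.pi) ^ 2 : ℝ) : ℂ)⁻¹ * ∫ p, symbolKernel q x p * Ψ p :=
    funext (Qop_eq_integral_symbolKernel hq h₁ h₂)
  have heuler := euler_integral_kernel (symbolKernel_inv_smul_smul hom)
    (isTempered_symbolKernel hq x) Ψ (differentiable_integral_symbolKernel_mul hq Ψ x)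
  have hfin : finrank ℝ ((ℝ × ℝ) × (ℝ × ℝ)) = 4 := by simp
  rw [Qop_S0_add_Qop_S0 hq, S0_eq_euler, hQ, euler_const_mul, heuler, hfin]
  push_cast
  ring

/-- if the symbol `q` is homogeneous of degree `c`, then
`S₀ Q(h₁,h₂) = Q(S₀h₁,h₂) + Q(h₁,S₀h₂) − c·Q(h₁,h₂)` for Schwartz `h₁,h₂`. -/
theorem stmt5 (c : ℕ) (q : ℝ × ℝ → ℝ × ℝ → ℂ)
    (hq : ContDiff ℝ (⊤ : ℕ∞) (fun p : (ℝ × ℝ) × (ℝ × ℝ) => q p.1 p.2))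
    (hom : ∀ t : ℝ, 0 < t → ∀ ξ η : ℝ × ℝ, q (t • ξ) (t • η) = (t : ℂ) ^ c * q ξ η)
    (h₁ h₂ : SchwartzMap (ℝ × ℝ) ℂ) :
    ∀ x, S0 (Qop q (⇑h₁) (⇑h₂)) x =
      Qop q (S0 (⇑h₁)) (⇑h₂) x + Qop q (⇑h₁) (S0 (⇑h₂)) x - (c : ℂ) * Qop q (⇑h₁) (⇑h₂) x :=
  stmt5_general c q (.of_homogeneous hq.continuous fun t ht p ↦ hom t ht p.1 p.2)
    (by simpa only [Complex.cpow_natCast] using hom) h₁ h₂
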